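/- Fix n ≥ 1 and for 0 ≤ j ≤ n let A_j be the 0-1 matrix indexed by (ZMod 2)^n with (A_j)_{x,y} = 1 if and only if the Hamming distance of x and y is j. Let 0 ≤ m ≤ n, let c_0, …, c_m be real numbers, and let f : {0, 1, …, n} → ℝ satisfy f(j) = Σ_{i=0}^{m} c_i K_i(j) for all 0 ≤ j ≤ n, where K_i(j) = Σ_{h=0}^{i} (-1)^h C(j, h) C(n-j, i-h). Then the rank of X = Σ_{j=0}^{n} f(j) A_j is at most Σ_{i=0}^{m} C(n, i). -/

import Mathlib

open Finset Matrix

/-- The Krawtchouk polynomial value `K_i(j; n)`. -/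
noncomputable def krawtchouk (n i j : ℕ) : ℝ :=
  ∑ h ∈ Finset.range (i + 1),
    (-1 : ℝ) ^ h * (Nat.choose j h) * (Nat.choose (n - j) (i - h))

/-- The distance-`j` adjacency matrix of the hypercube `(ZMod 2)^n`. -/
def hypercubeAdj (n j : ℕ) : Matrix (Fin n → ZMod 2) (Fin n → ZMod 2) ℝ :=
  fun x y => if hammingDist x y = j then 1 else 0

/-- The `±1`-valued character of `(ZMod 2)^n` indexed by a set `S` of coordinates. -/
def cubeCharacter {n : ℕ} (S : Finset (Fin n)) (x : Fin n → ZMod 2) : ℝ :=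
  ∏ k ∈ S, if x k = 0 then 1 else -1

open Polynomial in
lemma Finset.coeff_prod_one_add_C_mul_X {ι R : Type*} [CommSemiring R] (s : Finset ι)
    (a : ι → R) (i : ℕ) :
    (∏ k ∈ s, (1 + C (a k) * X)).coeff i = ∑ t ∈ s.powersetCard i, ∏ k ∈ t, a k := by
  classical
  rw [Finset.prod_one_add, finsetSum_coeff, Finset.powersetCard_eq_filter,
    Finset.sum_filter]
  refine Finset.sum_congr rfl fun t _ => ?_
  rw [Finset.prod_mul_distrib, Finset.prod_const, ← map_prod, coeff_C_mul_X_pow]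
  simp only [eq_comm]

open Polynomial in
lemma krawtchouk_eq_coeff (n i j : ℕ) :
    krawtchouk n i j = ((1 + C (-1 : ℝ) * X) ^ j * (1 + X) ^ (n - j)).coeff i := by
  have h : (1 + C (-1 : ℝ) * X) ^ j = ((1 + X) ^ j).comp (C (-1) * X) := by simp
  rw [h, coeff_mul, Finset.Nat.sum_antidiagonal_eq_sum_range_succ_mk, krawtchouk]
  refine Finset.sum_congr rfl fun k _ => ?_
  rw [comp_C_mul_X_coeff, coeff_one_add_X_pow, coeff_one_add_X_pow]
  ring

lemma cubeCharacter_mul {n : ℕ} (S : Finset (Fin n)) (x y : Fin n → ZMod 2) :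
    cubeCharacter S x * cubeCharacter S y = ∏ k ∈ S, if x k ≠ y k then (-1 : ℝ) else 1 := by
  rw [cubeCharacter, cubeCharacter, ← Finset.prod_mul_distrib]
  refine Finset.prod_congr rfl fun k _ => ?_
  have h : ∀ a : ZMod 2, a = 0 ∨ a = 1 := by decide
  rcases h (x k) with hx | hx <;> rcases h (y k) with hy | hy <;> simp [hx, hy]

open Polynomial in
/-- The addition formula for Krawtchouk polynomials. -/
lemma krawtchouk_hammingDist {n : ℕ} (i : ℕ) (x y : Fin n → ZMod 2) :
    krawtchouk n i (hammingDist x y) =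
      ∑ S ∈ (univ : Finset (Fin n)).powersetCard i, cubeCharacter S x * cubeCharacter S y := by
  simp only [cubeCharacter_mul]
  rw [← Finset.coeff_prod_one_add_C_mul_X, krawtchouk_eq_coeff]
  congr 1
  have hcard : #{k | ¬ x k ≠ y k} = n - hammingDist x y := by
    have := Finset.card_filter_add_card_filter_not (s := (univ : Finset (Fin n)))
      (fun k => x k ≠ y k)
    rw [Finset.card_univ, Fintype.card_fin] at this
    rw [hammingDist]
    omega
  rw [← Finset.prod_filter_mul_prod_filter_not univ (fun k => x k ≠ y k),
    Finset.prod_congr rfl (g := fun _ => 1 + C (-1 : ℝ) * X)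
      (fun k hk => by rw [if_pos (Finset.mem_filter.1 hk).2]),
    Finset.prod_congr (s₁ := {k | ¬ x k ≠ y k}) rfl (g := fun _ => 1 + (X : ℝ[X]))
      (fun k hk => by rw [if_neg (Finset.mem_filter.1 hk).2, C_1, one_mul]),
    Finset.prod_const, Finset.prod_const, hcard, hammingDist]

lemma sum_smul_hypercubeAdj_apply (n : ℕ) (f : ℕ → ℝ) (x y : Fin n → ZMod 2) :
    (∑ j ∈ Finset.range (n + 1), f j • hypercubeAdj n j) x y = f (hammingDist x y) := by
  have h : hammingDist x y < n + 1 :=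
    Nat.lt_succ_of_le (by simpa using hammingDist_le_card_fintype (x := x) (y := y))
  simp [Matrix.sum_apply, hypercubeAdj, h]

theorem rank_le_of_low_degree (n : ℕ) (hn : 1 ≤ n) (m : ℕ) (hm : m ≤ n)
    (c : ℕ → ℝ) (f : ℕ → ℝ)
    (hf : ∀ j ≤ n, f j = ∑ i ∈ Finset.range (m + 1), c i * krawtchouk n i j) :
    (∑ j ∈ Finset.range (n + 1), f j • hypercubeAdj n j).rank ≤
      ∑ i ∈ Finset.range (m + 1), Nat.choose n i := by
  let T : Finset (Σ _ : ℕ, Finset (Fin n)) :=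
    (Finset.range (m + 1)).sigma fun i => univ.powersetCard i
  let B : Matrix (Fin n → ZMod 2) T ℝ := Matrix.of fun x p => cubeCharacter p.1.2 x
  let M : Matrix T (Fin n → ZMod 2) ℝ := Matrix.of fun p y => c p.1.1 * cubeCharacter p.1.2 y
  have hfactor : ∑ j ∈ Finset.range (n + 1), f j • hypercubeAdj n j = B * M := by
    ext x y
    rw [sum_smul_hypercubeAdj_apply,
      hf _ (by simpa using hammingDist_le_card_fintype (x := x) (y := y)), Matrix.mul_apply]
    simp only [B, M, Matrix.of_apply]
    rw [Finset.sum_coe_sort T fun p => cubeCharacter p.2 x * (c p.1 * cubeCharacter p.2 y),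
      Finset.sum_sigma]
    refine Finset.sum_congr rfl fun i _ => ?_
    rw [krawtchouk_hammingDist, Finset.mul_sum]
    exact Finset.sum_congr rfl fun S _ => mul_left_comm _ _ _
  calc (∑ j ∈ Finset.range (n + 1), f j • hypercubeAdj n j).rank
      = (B * M).rank := by rw [hfactor]
    _ ≤ B.rank := Matrix.rank_mul_le_left B M
    _ ≤ Fintype.card T := Matrix.rank_le_card_width B
    _ = ∑ i ∈ Finset.range (m + 1), Nat.choose n i := by
      simp [T, Finset.card_sigma]
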